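/- arXiv:1310.7059 — 2 statements merged into one kernel-verified Lean document; each statement's English description precedes it below -/
import Mathlib

section
/- Fix integers n ≥ k ≥ 1 and a partition λ = (λ_1 ≥ λ_2 ≥ ⋯ ≥ λ_k ≥ 0) with λ_1 ≤ n−k, and set λ_{k+1} = 0. The weight generating function P_λ(α,β) = Σ_T wt(T), summed over all Condensed Catalan tableaux T of shape λ and size (k,n), satisfies P_λ(α,β) = α^k β^{n−k} · det A_λ^{α,β}, where A_λ^{α,β} is the k × k matrix with entries (for 1 ≤ i, j ≤ k) A_{ij} = β^{j−i} α^{λ_i−λ_{j+1}} ( binom(λ_{j+1}, j−i) + β·binom(λ_{j+1}, j−i+1) ) + β^{j−i} α^{λ_i−λ_j} Σ_{ℓ=0}^{λ_j−λ_{j+1}−1} α^ℓ ( binom(λ_j−ℓ−1, j−i−1) + β·binom(λ_j−ℓ−1, j−i) ), the entries being interpreted in the Laurent polynomial ring ℤ[α, α^{−1}, β, β^{−1}] (every entry in fact lies in ℤ[α,β]: for i = j+1 the entry equals 1 and for i > j+1 it equals 0), with binom(a,b) = 0 whenever b < 0 or b > a. -/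
open scoped Classical
open Finset

/-- A Condensed Catalan tableau with `k` rows inside a rectangle of width `w`,
of shape `lam`: cells are `none` (empty), `some true` (an α) or `some false` (a β). -/
def IsCCT (k w : ℕ) (lam : Fin k → ℕ) (F : Fin k → Fin w → Option Bool) : Prop :=
  (∀ (i : Fin k) (c : Fin w), lam i ≤ (c : ℕ) → F i c = none) ∧
  (∀ (i : Fin k) (c c' : Fin w), F i c = some false → c' < c → F i c' = none) ∧
  (∀ (i i' : Fin k) (c : Fin w), F i c = some true → i' < i → F i' c = none) ∧
  (∀ (i : Fin k) (c : Fin w), (c : ℕ) < lam i →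
    (∀ i' : Fin k, i < i' → F i' c ≠ some true) →
    (∀ c' : Fin w, c < c' → (c' : ℕ) < lam i → F i c' ≠ some false) →
    F i c ≠ none)

/-- The number of α's in the filling. -/
def aCount (k w : ℕ) (F : Fin k → Fin w → Option Bool) : ℕ :=
  (Finset.univ.filter fun p : Fin k × Fin w => F p.1 p.2 = some true).card

/-- The number of β's in the filling. -/
def bCount (k w : ℕ) (F : Fin k → Fin w → Option Bool) : ℕ :=
  (Finset.univ.filter fun p : Fin k × Fin w => F p.1 p.2 = some false).card

/-- The binomial coefficient `binom a b` for integer arguments, with the convention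
that it vanishes whenever `b < 0` or `b > a`. -/
def icho (a b : ℤ) : ℤ := if 0 ≤ b ∧ b ≤ a then ((a.toNat).choose b.toNat : ℤ) else 0

/-- The fraction field of `ℤ[α,β]`, in which the Laurent polynomial ring
`ℤ[α,α⁻¹,β,β⁻¹]` embeds. -/
abbrev KF := FractionRing (MvPolynomial (Fin 2) ℤ)

/-- The indeterminate α, viewed in the fraction field. -/
noncomputable def aK : KF := algebraMap (MvPolynomial (Fin 2) ℤ) KF (MvPolynomial.X 0)

/-- The indeterminate β, viewed in the fraction field. -/
noncomputable def bK : KF := algebraMap (MvPolynomial (Fin 2) ℤ) KF (MvPolynomial.X 1)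

/-!
Build a tableau row by row from the bottom. A row placed on top of a filling is determined by the
position of its β, if it has one: every box east of that β with no α below it must contain α. So the
sum over the fillings of a row of length `q` depends on the rows below only through their number `s`
of α's, and placing the row is the linear operator sending `φ` to `s ↦ φ q + β ∑_{s ≤ t < q} φ t`.
Summing over all tableaux amounts to applying the operators of all rows to `t ↦ α ^ t` and
evaluating at `0`.

Applied to `α ^ ·`, the operator of the top row gives a function that is a multiple of `α ^ s` minus
a correction. The multiple of `α ^ s` contributes the generating function of the rows below, and the
next operator takes the correction to a function of the initial kind with a binomial index raised by
one. Iterating gives a recursion whose coefficients are, up to sign, the entries of `A_λ`. Read from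
its bottom right corner, `A_λ` is a Hessenberg matrix with ones next to the diagonal, and this is
the recursion that its leading principal minors satisfy.
-/

section DetLowerHessenberg

variable {R : Type*} [CommRing R] {B : ℕ → ℕ → R} {D : ℕ → R}

theorem sum_range_lowerHessenberg_mul (hone : ∀ i, B i (i + 1) = 1)
    (hzero : ∀ i j, i + 1 < j → B i j = 0)
    (hrec : ∀ r, D (r + 1) = ∑ x ∈ antidiagonal r, (-1) ^ x.2 * B r x.1 * D x.1)
    {i n : ℕ} (hin : i ≤ n) :
    ∑ j ∈ range (n + 1), B i j * ((-1) ^ j * D j)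
      = if i = n then (-1) ^ n * D (n + 1) else 0 := by
  have hlower : ∑ j ∈ range (i + 1), B i j * ((-1) ^ j * D j) = (-1) ^ i * D (i + 1) := by
    rw [hrec, ← Nat.sum_antidiagonal_eq_sum_range_succ_mk
      (f := fun x => B i x.1 * ((-1) ^ x.1 * D x.1)), mul_sum]
    refine sum_congr rfl fun x hx => ?_
    have hsign : (-1 : R) ^ x.2 * (-1) ^ x.2 = 1 := by rw [← mul_pow]; simp
    rw [← mem_antidiagonal.mp hx, pow_add]
    linear_combination -(B (x.1 + x.2) x.1 * (-1) ^ x.1 * D x.1) * hsign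
  split_ifs with h
  · exact h ▸ hlower
  · have hsub : range (i + 2) ⊆ range (n + 1) := range_subset_range.mpr (by omega)
    rw [← sum_subset hsub fun j _ hj => by rw [hzero i j (by grind), zero_mul],
      sum_range_succ, hlower, hone]
    ring

-- The matrix sends the vector `(-1) ^ j * D j` to a multiple of the last basis vector, so the first
-- coordinate of Cramer's rule computes the determinant.
theorem det_lowerHessenberg (hone : ∀ i, B i (i + 1) = 1)
    (hzero : ∀ i j, i + 1 < j → B i j = 0) (hD : D 0 = 1)
    (hrec : ∀ r, D (r + 1) = ∑ x ∈ antidiagonal r, (-1) ^ x.2 * B r x.1 * D x.1) (k : ℕ) :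
    (Matrix.of fun i j : Fin k => B i j).det = D k := by
  obtain _ | n := k
  · simp [hD]
  set A : Matrix (Fin (n + 1)) (Fin (n + 1)) R := Matrix.of fun i j => B i j with hA
  set u : Fin (n + 1) → R := fun j => (-1) ^ (j : ℕ) * D j with hu
  have hAu : A.mulVec u = Pi.single (Fin.last n) ((-1) ^ n * D (n + 1)) := by
    funext i
    calc A.mulVec u i = ∑ j ∈ range (n + 1), B i j * ((-1) ^ j * D j) :=
          Fin.sum_univ_eq_sum_range (fun j => B i j * ((-1) ^ j * D j)) (n + 1)
      _ = _ := by
          rw [sum_range_lowerHessenberg_mul hone hzero hrec (Nat.le_of_lt_succ i.isLt)]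
          simp [Pi.single_apply, Fin.ext_iff]
  have hminor : (A.submatrix (Fin.last n).succAbove (Fin.succAbove 0)).det = 1 := by
    rw [Matrix.det_of_isLowerTriangular]
    · exact prod_eq_one fun i _ => by simp [hA, hone]
    · intro i j hij
      exact hzero _ _ (by simpa using hij)
  have hadj : A.adjugate.mulVec (A.mulVec u) = A.det • u := by
    rw [Matrix.mulVec_mulVec, Matrix.adjugate_mul, Matrix.smul_mulVec, Matrix.one_mulVec]
  have hsign : (-1 : R) ^ n * (-1) ^ n = 1 := by rw [← mul_pow]; simp
  have hu0 : u 0 = 1 := by simp [hu, hD]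
  have h0 := congrFun hadj 0
  rw [hAu, Matrix.mulVec_single, Pi.smul_apply, Pi.smul_apply, Matrix.col_apply,
    Matrix.adjugate_fin_succ_eq_det_submatrix, hminor, op_smul_eq_mul, hu0, smul_eq_mul,
    mul_one, mul_one, Fin.val_last, Fin.val_zero, add_zero] at h0
  linear_combination -h0 + D (n + 1) * hsign

end DetLowerHessenberg

section RowFilling

variable {ι : Type*} [LinearOrder ι]

/-- The fillings of a single row of a Condensed Catalan tableau, where `P` is the set of its boxes
with no α strictly south of them. -/
structure IsRowFilling (P : Finset ι) (row : ι → Option Bool) : Prop where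
  eq_none_of_notMem : ∀ c ∉ P, row c = none
  eq_none_of_lt : ∀ c c', row c = some false → c' < c → row c' = none
  ne_none : ∀ c ∈ P, (∀ c', c < c' → row c' ≠ some false) → row c ≠ none

/-- The row filling on the free boxes `P` with its β in box `x` (no β if `x = none`), α in every
free box east of it, and nothing to the west. -/
def rowFilling (P : Finset ι) (x : Option ι) (c : ι) : Option Bool :=
  if c ∈ P ∧ ∀ y ∈ x, y < c then some true else if x = some c then some false else none

theorem rowFilling_eq_some_true_iff {P : Finset ι} {x : Option ι} {c : ι} :
    rowFilling P x c = some true ↔ c ∈ P ∧ ∀ y ∈ x, y < c := by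
  unfold rowFilling
  split_ifs <;> simp_all

theorem rowFilling_eq_some_false_iff {P : Finset ι} {x : Option ι} {c : ι} :
    rowFilling P x c = some false ↔ x = some c := by
  have hne : (c ∈ P ∧ ∀ y ∈ x, y < c) → x ≠ some c := fun h hx => (h.2 c hx).false
  unfold rowFilling
  split_ifs with h <;> simp_all

theorem rowFilling_injective (P : Finset ι) : Function.Injective (rowFilling P) := by
  refine fun x x' h => Option.ext fun c => ?_
  rw [← rowFilling_eq_some_false_iff (P := P), h, rowFilling_eq_some_false_iff]

theorem isRowFilling_rowFilling {P : Finset ι} {x : Option ι} (hx : x ∈ insertNone P) :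
    IsRowFilling P (rowFilling P x) where
  eq_none_of_notMem c hc := by
    have hxc : x ≠ some c := fun h => hc (mem_insertNone.mp hx c h)
    simp [rowFilling, hc, hxc]
  eq_none_of_lt c c' h hlt := by
    obtain rfl := rowFilling_eq_some_false_iff.mp h
    simp [rowFilling, hlt.ne', hlt.le]
  ne_none c hc h := by
    by_cases hxc : x = some c
    · simp [rowFilling_eq_some_false_iff.mpr hxc]
    · have hlt : ∀ y ∈ x, y < c := fun y hy => by
        refine lt_of_le_of_ne (not_lt.mp fun hlt => ?_) fun hyc => hxc (hyc ▸ hy)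
        exact h y hlt (rowFilling_eq_some_false_iff.mpr hy)
      simp [rowFilling_eq_some_true_iff.mpr ⟨hc, hlt⟩]

theorem IsRowFilling.eq_rowFilling {P : Finset ι} {row : ι → Option Bool}
    (h : IsRowFilling P row) {x : Option ι} (hx : ∀ c, row c = some false ↔ x = some c) :
    row = rowFilling P x := by
  have htrue : ∀ c, row c = some true ↔ c ∈ P ∧ ∀ y ∈ x, y < c := by
    refine fun c => ⟨fun hc => ⟨?_, fun y hy => ?_⟩, fun ⟨hcP, hc⟩ => ?_⟩
    · by_contra hcP
      simp [h.eq_none_of_notMem c hcP] at hc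
    · have hy' := (hx y).mpr hy
      rcases lt_trichotomy y c with hlt | rfl | hlt
      · exact hlt
      · simp [hc] at hy'
      · simp [h.eq_none_of_lt y c hy' hlt] at hc
    · have hne := h.ne_none c hcP fun c' hlt hc' => (hc c' ((hx c').mp hc')).asymm hlt
      have hnf : row c ≠ some false := fun hf => (hc c ((hx c).mp hf)).false
      rcases hr : row c with _ | _ | _ <;> simp_all
  funext c
  refine Option.ext fun v => ?_
  cases v
  · rw [hx, rowFilling_eq_some_false_iff]
  · rw [htrue, rowFilling_eq_some_true_iff]

theorem isRowFilling_iff {P : Finset ι} {row : ι → Option Bool} :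
    IsRowFilling P row ↔ ∃ x ∈ insertNone P, rowFilling P x = row := by
  refine ⟨fun h => ?_, ?_⟩
  · by_cases hβ : ∃ c, row c = some false
    · obtain ⟨c₀, hc₀⟩ := hβ
      have huniq : ∀ c, row c = some false → c₀ = c := fun c hc => by
        by_contra hne
        rcases lt_or_gt_of_ne hne with hlt | hlt
        · simp [h.eq_none_of_lt c c₀ hc hlt] at hc₀
        · simp [h.eq_none_of_lt c₀ c hc₀ hlt] at hc
      have hc₀P : c₀ ∈ P := by
        by_contra hnot
        simp [h.eq_none_of_notMem c₀ hnot] at hc₀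
      refine ⟨some c₀, by simpa using hc₀P, (h.eq_rowFilling fun c => ?_).symm⟩
      exact ⟨fun hc => congrArg some (huniq c hc), fun hc => Option.some_inj.mp hc ▸ hc₀⟩
    · push Not at hβ
      exact ⟨none, none_mem_insertNone, (h.eq_rowFilling fun c => by simp [hβ c]).symm⟩
  · rintro ⟨x, hx, rfl⟩
    exact isRowFilling_rowFilling hx

theorem sum_card_filter_lt {M : Type*} [AddCommMonoid M] (ψ : ℕ → M) (P : Finset ι) :
    ∑ c ∈ P, ψ #{c' ∈ P | c < c'} = ∑ m ∈ range #P, ψ m := by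
  induction P using Finset.induction_on_min with
  | empty => simp
  | insert a s ha ih =>
    have hs : a ∉ s := fun h => (ha a h).false
    rw [sum_insert hs, card_insert_of_notMem hs, sum_range_succ, ← ih, add_comm]
    congr 1
    · refine sum_congr rfl fun c hc => ?_
      rw [filter_insert, if_neg (ha c hc).asymm]
    · rw [filter_insert, if_neg (lt_irrefl a), filter_true_of_mem ha]

theorem sum_isRowFilling [Fintype ι] {R : Type*} [CommSemiring R] (b : R) (φ : ℕ → R)
    (P : Finset ι) :
    ∑ row with IsRowFilling P row, b ^ #{c | row c = some false} * φ #{c | row c = some true}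
      = φ #P + b * ∑ m ∈ range #P, φ m := by
  have himage : univ.filter (IsRowFilling P) = (insertNone P).image (rowFilling P) := by
    ext row
    simp only [mem_filter, mem_univ, true_and, mem_image, isRowFilling_iff]
  rw [himage, sum_image (rowFilling_injective P).injOn, sum_insertNone]
  simp only [rowFilling_eq_some_false_iff, rowFilling_eq_some_true_iff]
  congr 1
  · simp
  · rw [← sum_card_filter_lt φ P, mul_sum]
    refine sum_congr rfl fun c _ => ?_
    have hP : univ.filter (fun c' => c' ∈ P ∧ c < c') = {c' ∈ P | c < c'} := by ext; simp
    simp [hP, filter_eq]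

end RowFilling

section Transfer

variable {R : Type*} [CommSemiring R]

/-- The transfer operator of a row of length `q`: if `φ t` is the weight of a tableau with `t` α's,
then `rowTransfer b q φ s` sums this weight, times `b` for each β in the row, over the fillings of
a row placed on top of a tableau with `s` α's. -/
def rowTransfer (b : R) (q : ℕ) : (ℕ → R) →ₗ[R] (ℕ → R) where
  toFun φ s := φ q + b * ∑ m ∈ range (q - s), φ (s + m)
  map_add' φ ψ := by
    funext s
    simp only [Pi.add_apply, sum_add_distrib]
    ring
  map_smul' c φ := by
    funext s
    simp only [Pi.smul_apply, smul_eq_mul, RingHom.id_apply, ← mul_sum]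
    ring

theorem rowTransfer_apply (b : R) (q : ℕ) (φ : ℕ → R) (s : ℕ) :
    rowTransfer b q φ s = φ q + b * ∑ m ∈ range (q - s), φ (s + m) := rfl

theorem rowTransfer_congr (b : R) {q : ℕ} {φ ψ : ℕ → R} (h : ∀ s ≤ q, φ s = ψ s) (s : ℕ) :
    rowTransfer b q φ s = rowTransfer b q ψ s := by
  rw [rowTransfer_apply, rowTransfer_apply, h q le_rfl]
  congr 2
  exact sum_congr rfl fun m hm => h _ (by grind)

/-- The composite of the transfer operators of the `r` lowest rows, evaluated at the empty tableau.
Rows are numbered from the bottom: `M 1 ≤ M 2 ≤ ⋯` are their lengths, and `M 0` is not a row. -/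
def transfer (b : R) (M : ℕ → ℕ) : ℕ → (ℕ → R) →ₗ[R] R
  | 0 => LinearMap.proj 0
  | r + 1 => transfer b M r ∘ₗ rowTransfer b (M (r + 1))

theorem transfer_succ (b : R) (M : ℕ → ℕ) (r : ℕ) (φ : ℕ → R) :
    transfer b M (r + 1) φ = transfer b M r (rowTransfer b (M (r + 1)) φ) := rfl

theorem transfer_congr (b : R) {M : ℕ → ℕ} {r : ℕ} {φ ψ : ℕ → R}
    (h : ∀ s ≤ M r, φ s = ψ s) : transfer b M r φ = transfer b M r ψ := by
  cases r with
  | zero => exact h 0 (Nat.zero_le _)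
  | succ r => exact congrArg (transfer b M r) (funext (rowTransfer_congr b h))

end Transfer

section Tableaux

variable {k w : ℕ}

/-- The columns containing an α. -/
def alphaColumns (F : Fin k → Fin w → Option Bool) : Finset (Fin w) :=
  {c | ∃ i, F i c = some true}

theorem IsCCT.aCount_eq_card_alphaColumns {lam : Fin k → ℕ} {F : Fin k → Fin w → Option Bool}
    (h : IsCCT k w lam F) : aCount k w F = #(alphaColumns F) := by
  have hnot : ∀ {i i' c}, F i c = some true → F i' c = some true → ¬ i < i' :=
    fun hi hi' hlt => by simp [h.2.2.1 _ _ _ hi' hlt] at hi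
  refine card_bij (fun p _ => p.2) ?_ ?_ ?_
  · intro p hp
    simp only [mem_filter, mem_univ, true_and] at hp
    simpa [alphaColumns] using ⟨_, hp⟩
  · rintro ⟨i, c⟩ hp ⟨i', c'⟩ hp' (rfl : c = c')
    simp only [mem_filter, mem_univ, true_and] at hp hp'
    rw [le_antisymm (not_lt.mp (hnot hp' hp)) (not_lt.mp (hnot hp hp'))]
  · intro c hc
    obtain ⟨i, hi⟩ : ∃ i, F i c = some true := by simpa [alphaColumns] using hc
    exact ⟨(i, c), by simp [hi], rfl⟩

/-- The boxes of a row of length `q` having no α below them when the row is placed on top of the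
filling `F`. -/
def freeBoxes (q : ℕ) (F : Fin k → Fin w → Option Bool) : Finset (Fin w) :=
  {c | (c : ℕ) < q ∧ c ∉ alphaColumns F}

theorem mem_freeBoxes {q : ℕ} {F : Fin k → Fin w → Option Bool} {c : Fin w} :
    c ∈ freeBoxes q F ↔ (c : ℕ) < q ∧ ∀ i, F i c ≠ some true := by
  simp [freeBoxes, alphaColumns]

theorem card_freeBoxes_add_card_alphaColumns {q : ℕ} (hq : q ≤ w)
    {F : Fin k → Fin w → Option Bool} (hF : ∀ c ∈ alphaColumns F, (c : ℕ) < q) :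
    #(freeBoxes q F) + #(alphaColumns F) = q := by
  have hdisj : Disjoint (freeBoxes q F) (alphaColumns F) :=
    disjoint_left.mpr fun c hc => (mem_filter.mp hc).2.2
  have hunion : freeBoxes q F ∪ alphaColumns F = ({c | (c : ℕ) < q} : Finset (Fin w)) := by
    ext c
    have := hF c
    grind [freeBoxes]
  rw [← card_union_of_disjoint hdisj, hunion, Fin.card_filter_val_lt, min_eq_right hq]

theorem isCCT_cons {lam : Fin (k + 1) → ℕ} {row : Fin w → Option Bool}
    {F : Fin k → Fin w → Option Bool} :
    IsCCT (k + 1) w lam (Fin.cons row F : Fin (k + 1) → Fin w → Option Bool) ↔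
      IsCCT k w (Fin.tail lam) F ∧ IsRowFilling (freeBoxes (lam 0) F) row := by
  constructor
  · rintro ⟨hshape, hβ, hα, hmax⟩
    refine ⟨⟨fun i => hshape i.succ, fun i => hβ i.succ,
      fun i i' c h hlt => hα i.succ i'.succ c h (Fin.succ_lt_succ_iff.mpr hlt),
      fun i c hc hS => hmax i.succ c hc (Fin.cases (by simp) (by simpa using hS))⟩,
      fun c hc => ?_, hβ 0, fun c hc hE => ?_⟩
    · by_cases hlt : (c : ℕ) < lam 0
      · obtain ⟨i, hi⟩ : ∃ i, F i c = some true := by simpa [mem_freeBoxes, hlt] using hc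
        exact hα i.succ 0 c hi i.succ_pos
      · exact hshape 0 c (not_lt.mp hlt)
    · rw [mem_freeBoxes] at hc
      exact hmax 0 c hc.1 (Fin.cases (by simp) fun i _ => hc.2 i) fun c' hlt _ => hE c' hlt
  · rintro ⟨⟨hshape, hβ, hα, hmax⟩, hrow⟩
    have hnone : ∀ c : Fin w, lam 0 ≤ (c : ℕ) → row c = none := fun c hc =>
      hrow.eq_none_of_notMem c fun h => (mem_freeBoxes.mp h).1.not_ge hc
    refine ⟨Fin.forall_fin_succ.mpr ⟨hnone, hshape⟩,
      Fin.forall_fin_succ.mpr ⟨hrow.eq_none_of_lt, hβ⟩,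
      Fin.forall_fin_succ.mpr ⟨fun i' c _ hlt => absurd hlt (Fin.not_lt_zero i'), fun i =>
        Fin.forall_fin_succ.mpr ⟨fun c h _ => ?_, fun i' c h hlt => ?_⟩⟩,
      Fin.forall_fin_succ.mpr ⟨fun c hc hS hE => ?_, fun i c hc hS => ?_⟩⟩
    · exact hrow.eq_none_of_notMem c fun hc => (mem_freeBoxes.mp hc).2 i h
    · exact hα i i' c h (Fin.succ_lt_succ_iff.mp hlt)
    · refine hrow.ne_none c (mem_freeBoxes.mpr ⟨hc, fun i => hS i.succ i.succ_pos⟩) ?_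
      exact fun c' hlt h => hE c' hlt (lt_of_not_ge fun hle => by simp [hnone c' hle] at h) h
    · exact hmax i c hc fun i' hlt => hS i'.succ (Fin.succ_lt_succ_iff.mpr hlt)

theorem card_cells_cons (row : Fin w → Option Bool) (F : Fin k → Fin w → Option Bool)
    (v : Bool) :
    #{p : Fin (k + 1) × Fin w |
        (Fin.cons row F : Fin (k + 1) → Fin w → Option Bool) p.1 p.2 = some v}
      = #{c | row c = some v} + #{p : Fin k × Fin w | F p.1 p.2 = some v} := by
  simp only [card_filter, Fintype.sum_prod_type, Fin.sum_univ_succ, Fin.cons_zero, Fin.cons_succ]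

theorem aCount_cons (row : Fin w → Option Bool) (F : Fin k → Fin w → Option Bool) :
    aCount (k + 1) w (Fin.cons row F : Fin (k + 1) → Fin w → Option Bool)
      = #{c | row c = some true} + aCount k w F :=
  card_cells_cons row F true

theorem bCount_cons (row : Fin w → Option Bool) (F : Fin k → Fin w → Option Bool) :
    bCount (k + 1) w (Fin.cons row F : Fin (k + 1) → Fin w → Option Bool)
      = #{c | row c = some false} + bCount k w F :=
  card_cells_cons row F false

theorem sum_isCCT_cons {R : Type*} [CommSemiring R] (b : R) (φ : ℕ → R) {lam : Fin (k + 1) → ℕ}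
    (hlam : Antitone lam) (hw : lam 0 ≤ w) {F : Fin k → Fin w → Option Bool}
    (hF : IsCCT k w (Fin.tail lam) F) :
    ∑ row with IsRowFilling (freeBoxes (lam 0) F) row,
        b ^ bCount (k + 1) w (Fin.cons row F : Fin (k + 1) → Fin w → Option Bool) *
          φ (aCount (k + 1) w (Fin.cons row F : Fin (k + 1) → Fin w → Option Bool))
      = b ^ bCount k w F * rowTransfer b (lam 0) φ (aCount k w F) := by
  have hcols : ∀ c ∈ alphaColumns F, (c : ℕ) < lam 0 := fun c hc => by
    obtain ⟨i, hi⟩ : ∃ i, F i c = some true := by simpa [alphaColumns] using hc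
    by_contra hle
    simp [hF.1 i c ((hlam (Fin.zero_le i.succ)).trans (not_lt.mp hle))] at hi
  have hcard : aCount k w F + #(freeBoxes (lam 0) F) = lam 0 := by
    rw [hF.aCount_eq_card_alphaColumns, add_comm, card_freeBoxes_add_card_alphaColumns hw hcols]
  have hrow := sum_isRowFilling b (fun m => φ (aCount k w F + m)) (freeBoxes (lam 0) F)
  rw [hcard, show #(freeBoxes (lam 0) F) = lam 0 - aCount k w F by omega] at hrow
  rw [rowTransfer_apply, ← hrow, mul_sum]
  refine sum_congr rfl fun row _ => ?_
  rw [bCount_cons, aCount_cons, pow_add, add_comm (aCount k w F)]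
  ring

theorem sum_isCCT {R : Type*} [CommSemiring R] (b : R) {M : ℕ → ℕ} (hM : Monotone M) {r : ℕ}
    (hw : M r ≤ w) (φ : ℕ → R) :
    ∑ F with IsCCT r w (fun i => M (r - i)) F, b ^ bCount r w F * φ (aCount r w F)
      = transfer b M r φ := by
  induction r generalizing φ with
  | zero =>
    have hall : univ.filter (IsCCT 0 w fun i => M (0 - i)) = univ := by ext F; simp [IsCCT]
    rw [hall, Fintype.sum_unique]
    simp [transfer, aCount, bCount]
  | succ r ih =>
    have hanti : Antitone fun i : Fin (r + 1) => M (r + 1 - i) := fun i j hij => hM (by omega)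
    have htail : Fin.tail (fun i : Fin (r + 1) => M (r + 1 - i)) = fun i : Fin r => M (r - i) := by
      funext i
      simp [Fin.tail]
    rw [transfer_succ, ← ih ((hM r.le_succ).trans hw), sum_filter,
      ← (Fin.consEquiv fun _ : Fin (r + 1) => Fin w → Option Bool).sum_comp,
      Fintype.sum_prod_type, sum_comm, sum_filter]
    refine sum_congr rfl fun F _ => ?_
    simp only [Fin.consEquiv, Equiv.coe_fn_mk, isCCT_cons, htail]
    split_ifs with hF
    · simp only [hF, true_and]
      rw [← sum_filter]
      exact sum_isCCT_cons b φ hanti hw (htail ▸ hF)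
    · simp [hF]

end Tableaux

section Icho

theorem icho_natCast (a d : ℕ) : icho a d = a.choose d := by
  unfold icho
  split_ifs with h
  · simp
  · rw [Nat.choose_eq_zero_of_lt (by omega), Nat.cast_zero]

theorem icho_of_neg (a : ℤ) {d : ℤ} (hd : d < 0) : icho a d = 0 :=
  if_neg fun h => hd.not_ge h.1

theorem icho_of_lt {a d : ℤ} (h : a < d) : icho a d = 0 :=
  if_neg fun h' => h.not_ge h'.2

theorem icho_zero_right {a : ℤ} (ha : 0 ≤ a) : icho a 0 = 1 := by
  simp [icho, ha]

theorem icho_succ (a : ℕ) (d : ℤ) : icho (a + 1) d = icho a (d - 1) + icho a d := by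
  rcases lt_trichotomy d 0 with hd | rfl | hd
  · simp [icho_of_neg, hd, hd.trans zero_lt_one]
  · rw [icho_zero_right (by omega), icho_zero_right (by omega), icho_of_neg _ (by omega), zero_add]
  · obtain ⟨e, rfl⟩ : ∃ e : ℕ, d = e + 1 := ⟨(d - 1).toNat, by omega⟩
    have hpascal := Nat.choose_succ_succ' a e
    have h := icho_natCast (a + 1) (e + 1)
    have h' := icho_natCast a (e + 1)
    push_cast at h h'
    rw [add_sub_cancel_right, icho_natCast, h, h', hpascal, Nat.cast_add]

end Icho

section Residual

variable {R : Type*} [CommRing R]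

/-- The coefficient of `z ^ d` in `(z + b) (1 + z) ^ p`, for `p ≥ 0`. -/
def binomPair (b : R) (p d : ℤ) : R := (icho p (d - 1) : R) + b * (icho p d : R)

theorem binomPair_succ (b : R) (p : ℕ) (d : ℤ) :
    binomPair b (p + 1) (d + 1) = binomPair b p d + binomPair b p (d + 1) := by
  simp only [binomPair, icho_succ, add_sub_cancel_right, Int.cast_add]
  ring

theorem binomPair_zero_right (b : R) {p : ℤ} (hp : 0 ≤ p) : binomPair b p 0 = b := by
  simp [binomPair, icho_zero_right hp, icho_of_neg]

/-- The sum over `ℓ` in the entries of `A_λ`, with `q = λ_{j+1}`, `p = λ_j` and `d = j - i`. -/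
def stripSum (a b : R) (q p : ℕ) (d : ℤ) : R :=
  ∑ l ∈ range (p - q), a ^ l * binomPair b (p - l - 1) d

theorem stripSum_self (a b : R) (p : ℕ) (d : ℤ) : stripSum a b p p d = 0 := by
  simp [stripSum]

theorem stripSum_succ (a b : R) {q p : ℕ} (h : q ≤ p) (d : ℤ) :
    stripSum a b q (p + 1) d = a * stripSum a b q p d + binomPair b p d := by
  rw [stripSum, Nat.succ_sub h, sum_range_succ', stripSum, mul_sum]
  congr 1
  · refine sum_congr rfl fun l _ => ?_
    rw [pow_succ', mul_assoc]
    congr 4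
    push_cast
    ring
  · simp

theorem stripSum_eq_add (a b : R) {s q p : ℕ} (hsq : s ≤ q) (hqp : q ≤ p) (d : ℤ) :
    stripSum a b s p d = stripSum a b q p d + a ^ (p - q) * stripSum a b s q d := by
  induction p, hqp using Nat.le_induction with
  | base => simp [stripSum_self]
  | succ p hqp ih =>
    rw [stripSum_succ a b (hsq.trans hqp), stripSum_succ a b hqp, ih, Nat.succ_sub hqp,
      pow_succ]
    ring

/-- The entry `A_{ij}` of `A_λ` without its monomial factor `β ^ (j - i) * α ^ (λ_i - λ_j)`, with
`q = λ_{j+1}`, `p = λ_j` and `d = j - i`. -/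
def stripEntry (a b : R) (q p : ℕ) (d : ℤ) : R :=
  a ^ (p - q) * binomPair b q (d + 1) + stripSum a b q p d

theorem stripEntry_of_lt (a b : R) (q p : ℕ) {d : ℤ} (hd : d < -1) :
    stripEntry a b q p d = 0 := by
  simp [stripEntry, stripSum, binomPair, icho_of_neg _ (show d < 0 by omega),
    icho_of_neg _ (show d - 1 < 0 by omega), icho_of_neg _ (show d + 1 < 0 by omega)]

theorem stripEntry_neg_one (a b : R) (q p : ℕ) : stripEntry a b q p (-1) = a ^ (p - q) * b := by
  simp [stripEntry, stripSum, binomPair, icho_of_neg, icho_zero_right]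

/-- What is left of `rowTransfer b p (a ^ ·)` after `d` steps of the recursion for the
generating function of the tableaux. -/
def rowResidual (a b : R) (p : ℕ) (d : ℤ) (s : ℕ) : R :=
  a ^ p * (icho s d : R) + a ^ s * stripSum a b s p d

theorem rowTransfer_pow (a b : R) (p : ℕ) : rowTransfer b p (a ^ ·) = rowResidual a b p 0 := by
  funext s
  have hstrip : stripSum a b s p 0 = ∑ l ∈ range (p - s), a ^ l * b :=
    sum_congr rfl fun l hl => by rw [binomPair_zero_right b (by grind)]
  rw [rowTransfer_apply, rowResidual, hstrip, icho_zero_right (by omega), ← sum_mul]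
  simp only [pow_add, ← mul_sum]
  push_cast
  ring

theorem rowResidual_self (a b : R) (p : ℕ) (d : ℤ) :
    rowResidual a b p d p = a ^ p * (icho p d : R) := by
  simp [rowResidual, stripSum_self]

theorem rowResidual_succ (a b : R) {s p : ℕ} (h : s ≤ p) (d : ℤ) :
    rowResidual a b (p + 1) d s = a * rowResidual a b p d s + a ^ s * binomPair b p d := by
  rw [rowResidual, rowResidual, stripSum_succ a b h]
  ring

/-- The multiple of `a ^ s` that cancels the leading part of `rowResidual a b q d s`, minus the
latter. -/
def defect (a b : R) (q : ℕ) (d : ℤ) (s : ℕ) : R :=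
  binomPair b q (d + 1) * a ^ s - rowResidual a b q d s

theorem rowResidual_eq_sub_defect (a b : R) {s q p : ℕ} (hsq : s ≤ q) (hqp : q ≤ p) (d : ℤ) :
    rowResidual a b p d s = stripEntry a b q p d * a ^ s - a ^ (p - q) * defect a b q d s := by
  have hpow : a ^ p = a ^ (p - q) * a ^ q := by rw [← pow_add, Nat.sub_add_cancel hqp]
  rw [rowResidual, stripEntry, defect, rowResidual, stripSum_eq_add a b hsq hqp, hpow]
  ring

theorem defect_self (a b : R) (q : ℕ) (d : ℤ) :
    defect a b q d q = b * a ^ q * (icho q (d + 1) : R) := by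
  rw [defect, rowResidual_self, binomPair, add_sub_cancel_right]
  ring

theorem defect_succ (a b : R) {s q : ℕ} (h : s ≤ q) (d : ℤ) :
    defect a b (q + 1) d s
      = a * defect a b q d s + (1 - a) * a ^ s * binomPair b q (d + 1) := by
  rw [defect, defect, rowResidual_succ a b h]
  push_cast
  rw [binomPair_succ]
  ring

theorem sum_defect_succ (a b : R) {s q : ℕ} (h : s ≤ q) (d : ℤ) :
    ∑ m ∈ range (q - s), defect a b (q + 1) d (s + m)
      = a * ∑ m ∈ range (q - s), defect a b q d (s + m)
        + (a ^ s - a ^ q) * binomPair b q (d + 1) := by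
  have hgeom : a ^ s * ((1 - a) * ∑ m ∈ range (q - s), a ^ m) = a ^ s - a ^ q := by
    rw [mul_neg_geom_sum, mul_sub, mul_one, ← pow_add, Nat.add_sub_cancel' h]
  rw [← hgeom, mul_sum, mul_sum, mul_sum, sum_mul, ← sum_add_distrib]
  refine sum_congr rfl fun m hm => ?_
  rw [defect_succ a b (by grind), pow_add]
  ring

theorem rowTransfer_defect (a b : R) {s q : ℕ} (h : s ≤ q) (d : ℤ) :
    rowTransfer b q (defect a b q d) s = b * rowResidual a b q (d + 1) s := by
  induction q, h using Nat.le_induction with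
  | base =>
    rw [rowTransfer_apply, defect_self, rowResidual_self]
    simp [mul_assoc]
  | succ q hsq ih =>
    rw [rowTransfer_apply, defect_self] at ih
    rw [rowTransfer_apply, Nat.succ_sub hsq, sum_range_succ, Nat.add_sub_cancel' hsq,
      sum_defect_succ a b hsq, defect_self, defect_succ a b le_rfl, defect_self,
      rowResidual_succ a b hsq]
    push_cast
    rw [icho_succ, add_sub_cancel_right]
    have hpair : binomPair b q (d + 1) = (icho q d : R) + b * (icho q (d + 1) : R) := by
      rw [binomPair, add_sub_cancel_right]
    push_cast
    linear_combination a * ih - b * a ^ (q + 1) * hpair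

end Residual

section Recursion

variable {R : Type*} [CommRing R] {M : ℕ → ℕ}

theorem transfer_zero_rowResidual (a b : R) (hM0 : M 0 = 0) {d : ℤ} (hd : 0 ≤ d) :
    transfer b M 0 (rowResidual a b (M 1) d) = stripEntry a b (M 0) (M 1) d := by
  simp [transfer, rowResidual, stripEntry, binomPair, hM0, icho_of_lt (Int.lt_add_one_of_le hd)]

theorem transfer_succ_rowResidual (a b : R) (hM : Monotone M) (r : ℕ) (d : ℤ) :
    transfer b M (r + 1) (rowResidual a b (M (r + 2)) d)
      = stripEntry a b (M (r + 1)) (M (r + 2)) d * transfer b M (r + 1) (a ^ ·)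
        - a ^ (M (r + 2) - M (r + 1)) *
          (b * transfer b M r (rowResidual a b (M (r + 1)) (d + 1))) := by
  have hexpand : transfer b M (r + 1) (rowResidual a b (M (r + 2)) d)
      = transfer b M (r + 1) (stripEntry a b (M (r + 1)) (M (r + 2)) d • (a ^ ·)
        - a ^ (M (r + 2) - M (r + 1)) • defect a b (M (r + 1)) d) :=
    transfer_congr b fun s hs => rowResidual_eq_sub_defect a b hs (hM (r + 1).le_succ) d
  have hdefect : transfer b M (r + 1) (defect a b (M (r + 1)) d)
      = transfer b M r (b • rowResidual a b (M (r + 1)) (d + 1)) :=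
    transfer_congr b fun s hs => rowTransfer_defect a b (hs.trans (hM r.le_succ)) d
  rw [hexpand, map_sub, map_smul, map_smul, hdefect, map_smul]
  rfl

theorem transfer_rowResidual (a b : R) (hM : Monotone M) (hM0 : M 0 = 0) (r : ℕ) {d : ℤ}
    (hd : 0 ≤ d) :
    transfer b M r (rowResidual a b (M (r + 1)) d)
      = ∑ x ∈ antidiagonal r, (-b) ^ x.2 * a ^ (M (r + 1) - M (x.1 + 1)) *
          stripEntry a b (M x.1) (M (x.1 + 1)) (d + x.2) * transfer b M x.1 (a ^ ·) := by
  induction r generalizing d with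
  | zero =>
    rw [transfer_zero_rowResidual a b hM0 hd]
    simp [transfer]
  | succ r ih =>
    rw [transfer_succ_rowResidual a b hM, ih (by omega), Nat.sum_antidiagonal_succ',
      mul_sum, mul_sum, sub_eq_add_neg, ← sum_neg_distrib]
    congr 1
    · simp
    · refine sum_congr rfl fun x hx => ?_
      have hx1 : M (x.1 + 1) ≤ M (r + 1) := hM (by have := mem_antidiagonal.mp hx; omega)
      have hr : M (r + 1) ≤ M (r + 2) := hM (r + 1).le_succ
      have hsub : M (r + 2) - M (x.1 + 1) = M (r + 2) - M (r + 1) + (M (r + 1) - M (x.1 + 1)) := by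
        omega
      have hd' : d + ((x.2 + 1 : ℕ) : ℤ) = d + 1 + x.2 := by omega
      rw [hsub, hd', pow_add, pow_succ]
      ring

theorem transfer_succ_pow (a b : R) (hM : Monotone M) (hM0 : M 0 = 0) (r : ℕ) :
    transfer b M (r + 1) (a ^ ·)
      = ∑ x ∈ antidiagonal r, (-b) ^ x.2 * a ^ (M (r + 1) - M (x.1 + 1)) *
          stripEntry a b (M x.1) (M (x.1 + 1)) x.2 * transfer b M x.1 (a ^ ·) := by
  rw [transfer_succ, rowTransfer_pow, transfer_rowResidual a b hM hM0 r le_rfl]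
  simp only [zero_add]

end Recursion

section Determinant

variable {K : Type*} [Field K] {a b : K}

/-- The matrix `A_λ` with rows and columns in reverse order (`i = k - 1 - r`, `j = k - 1 - c` for
zero-based indices), extended to all of `ℕ`; row lengths are numbered from the bottom as in
`transfer`. -/
def reverseEntry (a b : K) (M : ℕ → ℕ) (r c : ℕ) : K :=
  b ^ ((r : ℤ) - c) * a ^ ((M (r + 1) : ℤ) - M (c + 1)) *
    stripEntry a b (M c) (M (c + 1)) ((r : ℤ) - c)

theorem reverseEntry_succ (ha : a ≠ 0) (hb : b ≠ 0) {M : ℕ → ℕ} (hM : Monotone M) (r : ℕ) :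
    reverseEntry a b M r (r + 1) = 1 := by
  have hpow : a ^ ((M (r + 1) : ℤ) - M (r + 2)) * a ^ (M (r + 2) - M (r + 1)) = 1 := by
    rw [← zpow_natCast, Nat.cast_sub (hM (r + 1).le_succ), ← zpow_add₀ ha]
    simp
  rw [reverseEntry, show (r : ℤ) - (r + 1 : ℕ) = -1 by omega, stripEntry_neg_one, zpow_neg_one]
  linear_combination b⁻¹ * b * hpow + inv_mul_cancel₀ hb

theorem reverseEntry_add_left (a b : K) {M : ℕ → ℕ} (hM : Monotone M) (c e : ℕ) :
    reverseEntry a b M (c + e) c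
      = b ^ e * a ^ (M (c + e + 1) - M (c + 1)) * stripEntry a b (M c) (M (c + 1)) e := by
  rw [reverseEntry, show ((c + e : ℕ) : ℤ) - c = e by omega,
    ← Nat.cast_sub (hM (by omega : c + 1 ≤ c + e + 1)), zpow_natCast, zpow_natCast]

theorem det_reverseEntry (ha : a ≠ 0) (hb : b ≠ 0) {M : ℕ → ℕ} (hM : Monotone M) (hM0 : M 0 = 0)
    (k : ℕ) :
    (Matrix.of fun i j : Fin k => reverseEntry a b M i j).det = transfer b M k (a ^ ·) := by
  refine det_lowerHessenberg (D := fun r => transfer b M r (a ^ ·))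
    (reverseEntry_succ ha hb hM) (fun i j hij => ?_) (by simp [transfer]) (fun r => ?_) k
  · rw [reverseEntry, stripEntry_of_lt a b _ _ (by omega), mul_zero]
  · rw [transfer_succ_pow a b hM hM0]
    refine sum_congr rfl fun x hx => ?_
    rw [← mem_antidiagonal.mp hx, reverseEntry_add_left a b hM, neg_pow b]
    ring

/-- The length of the `t`-th row of `lam`, zero for rows below the diagram. -/
def rowLength {k : ℕ} (lam : Fin k → ℕ) (t : ℕ) : ℕ := if h : t < k then lam ⟨t, h⟩ else 0

theorem antitone_rowLength {k : ℕ} {lam : Fin k → ℕ} (hlam : Antitone lam) :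
    Antitone (rowLength lam) := by
  intro i j hij
  unfold rowLength
  split_ifs with hj hi
  · exact hlam hij
  · omega
  · exact Nat.zero_le _
  · exact le_rfl

/-- The matrix `A_λ^{α,β}`, with α and β specialised to elements of a field. Indices are
zero-based. -/
def catalanMatrix {k : ℕ} (a b : K) (lam : Fin k → ℕ) : Matrix (Fin k) (Fin k) K :=
  Matrix.of fun i j =>
    let L := rowLength lam
    b ^ ((j : ℤ) - (i : ℤ)) * a ^ ((L i : ℤ) - (L (j + 1) : ℤ)) *
        ((icho (L (j + 1)) ((j : ℤ) - (i : ℤ)) : K)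
          + b * (icho (L (j + 1)) ((j : ℤ) - (i : ℤ) + 1) : K))
      + b ^ ((j : ℤ) - (i : ℤ)) * a ^ ((L i : ℤ) - (L j : ℤ)) *
        ∑ l ∈ range (L j - L (j + 1)),
          a ^ l * ((icho ((L j : ℤ) - (l : ℤ) - 1) ((j : ℤ) - (i : ℤ) - 1) : K)
            + b * (icho ((L j : ℤ) - (l : ℤ) - 1) ((j : ℤ) - (i : ℤ)) : K))

theorem catalanMatrix_apply (ha : a ≠ 0) (b : K) {k : ℕ} {lam : Fin k → ℕ} (hlam : Antitone lam)
    (i j : Fin k) :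
    catalanMatrix a b lam i j
      = b ^ ((j : ℤ) - i) * a ^ ((rowLength lam i : ℤ) - rowLength lam j) *
        stripEntry a b (rowLength lam (j + 1)) (rowLength lam j) ((j : ℤ) - i) := by
  have hle : rowLength lam (j + 1) ≤ rowLength lam j := antitone_rowLength hlam (Nat.le_succ _)
  have hpow : a ^ ((rowLength lam i : ℤ) - rowLength lam (j + 1))
      = a ^ ((rowLength lam i : ℤ) - rowLength lam j) *
        a ^ (rowLength lam j - rowLength lam (j + 1)) := by
    rw [← zpow_natCast a (_ - _), Nat.cast_sub hle, ← zpow_add₀ ha, sub_add_sub_cancel]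
  simp only [catalanMatrix, Matrix.of_apply, stripEntry, stripSum, binomPair,
    add_sub_cancel_right, hpow]
  ring

theorem det_catalanMatrix (ha : a ≠ 0) (hb : b ≠ 0) {k : ℕ} {lam : Fin k → ℕ}
    (hlam : Antitone lam) :
    (catalanMatrix a b lam).det = transfer b (fun r => rowLength lam (k - r)) k (a ^ ·) := by
  have hM : Monotone fun r => rowLength lam (k - r) :=
    fun r c hrc => antitone_rowLength hlam (by omega)
  rw [← det_reverseEntry ha hb hM (by simp [rowLength]),
    ← Matrix.det_submatrix_equiv_self Fin.revPerm (catalanMatrix a b lam)]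
  congr 1
  ext i j
  have hij : ((Fin.rev j : Fin k) : ℤ) - (Fin.rev i : Fin k) = i - j := by
    simp only [Fin.val_rev]
    omega
  have hsucc : (Fin.rev j : ℕ) + 1 = k - j := by
    rw [Fin.val_rev]
    omega
  simp only [Matrix.submatrix_apply, Fin.revPerm_apply, catalanMatrix_apply ha b hlam,
    Matrix.of_apply, reverseEntry, hij, hsucc]
  simp only [Fin.val_rev]

end Determinant

theorem stmt2_general {K : Type*} [Field K] {a b : K} (ha : a ≠ 0) (hb : b ≠ 0) {k w : ℕ}
    {lam : Fin k → ℕ} (hlam : Antitone lam) (hw : ∀ i, lam i ≤ w) :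
    ∑ F with IsCCT k w lam F, a ^ (k + aCount k w F) * b ^ (w + bCount k w F)
      = a ^ k * b ^ w * (catalanMatrix a b lam).det := by
  have hM : Monotone fun r => rowLength lam (k - r) :=
    fun r c hrc => antitone_rowLength hlam (by omega)
  have hlen : (fun i : Fin k => rowLength lam (k - (k - i))) = lam := by
    funext i
    simp [rowLength, Nat.sub_sub_self i.isLt.le]
  have htop : rowLength lam (k - k) ≤ w := by
    unfold rowLength
    split_ifs
    exacts [hw _, Nat.zero_le w]
  have hsum := sum_isCCT b hM htop (a ^ ·)
  rw [hlen, ← det_catalanMatrix ha hb hlam] at hsum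
  rw [← hsum, mul_sum]
  exact sum_congr rfl fun F _ => by ring

theorem aK_ne_zero : aK ≠ 0 :=
  IsFractionRing.to_map_eq_zero_iff.not.mpr (MvPolynomial.X_ne_zero 0)

theorem bK_ne_zero : bK ≠ 0 :=
  IsFractionRing.to_map_eq_zero_iff.not.mpr (MvPolynomial.X_ne_zero 1)

/-- The weight generating function `P_lam(α,β) = Σ_T wt T` over Condensed Catalan
tableaux of shape `lam` and size `(k,n)` equals `α^k β^(n-k) det A_lam^{α,β}`. -/
theorem stmt2 (n k : ℕ) (hk : 1 ≤ k) (hkn : k ≤ n) (lam : Fin k → ℕ)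
    (hmono : ∀ i j : Fin k, i ≤ j → lam j ≤ lam i) (hbd : ∀ i, lam i ≤ n - k) :
    ∑ F ∈ Finset.univ.filter (IsCCT k (n - k) lam),
        aK ^ (k + aCount k (n - k) F) * bK ^ ((n - k) + bCount k (n - k) F)
      = aK ^ k * bK ^ (n - k) *
        Matrix.det (Matrix.of fun i j : Fin k =>
          (let lamE : ℕ → ℕ := fun t => if h : t < k then lam ⟨t, h⟩ else 0
           bK ^ ((j : ℤ) - (i : ℤ)) * aK ^ ((lamE i : ℤ) - (lamE (j + 1) : ℤ)) *
              (((icho (lamE (j + 1)) ((j : ℤ) - (i : ℤ)) : ℤ) : KF)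
                + bK * ((icho (lamE (j + 1)) ((j : ℤ) - (i : ℤ) + 1) : ℤ) : KF))
            + bK ^ ((j : ℤ) - (i : ℤ)) * aK ^ ((lamE i : ℤ) - (lamE j : ℤ)) *
              ∑ l ∈ Finset.range (lamE j - lamE (j + 1)),
                aK ^ (l : ℕ) *
                  (((icho ((lamE j : ℤ) - (l : ℤ) - 1) ((j : ℤ) - (i : ℤ) - 1) : ℤ) : KF)
                    + bK * ((icho ((lamE j : ℤ) - (l : ℤ) - 1) ((j : ℤ) - (i : ℤ)) : ℤ) : KF)))) :=
  stmt2_general aK_ne_zero bK_ne_zero (fun i j hij => hmono i j hij) hbd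
end

section
/- Fix integers n ≥ 1 and s, t with 1 ≤ s ≤ n and 0 ≤ t ≤ s. The coefficient of the monomial α^{n−t} β^{n+t−s} in the polynomial Σ_{k=0}^{n} N_{n−k,k}(α,β) ∈ ℤ[α,β] equals (s/(2n−s))·binom(2n−s, n); equivalently, (2n−s) times this coefficient equals s·binom(2n−s, n). In particular the coefficient does not depend on t. -/
open scoped Classical
open Finset

/-!
Let `f` be the number of columns without an α and `r` the number of rows without a β. Columns
carry at most one α and rows at most one β, so a tableau in a `k × (n - k)` rectangle has weight
`α^(n - f) β^(n - r)`, and the coefficient counts the tableaux with `f = t` and `r = s - t`.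

A tableau whose shape misses the last column comes from a narrower rectangle; otherwise its top row
is full and can be removed. Such a row is determined by the position of its β, if any, among the
free columns of the rest. Altogether a tableau of semiperimeter `n` with parameters `(f, r)` has
one descendant of semiperimeter `n + 1` for each of `(0, r + 1), (1, r), …, (f + 1, r)`. Taking
differences, the numbers `C n t r` of tableaux satisfy
`C (n + 1) (t + 1) r = C n t r + C (n + 1) (t + 2) r` and `C (n + 1) 0 (r + 1) = C (n + 1) 1 r`,
a ballot recursion in `n` and `t + r`.
-/

variable {k w : ℕ} {M : Type*} [AddCommMonoid M]

theorem sum_card_filter_le {ι : Type*} [LinearOrder ι] (U : Finset ι) (g : ℕ → M) :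
    ∑ p ∈ U, g #{c ∈ U | c ≤ p} = ∑ i ∈ range #U, g (i + 1) := by
  induction U using Finset.induction_on_max with
  | empty => simp
  | insert m U hm ih =>
    have hmU : m ∉ U := fun h => lt_irrefl _ (hm m h)
    have hle : ∀ c ∈ insert m U, c ≤ m := by
      simpa using fun c hc => (hm c hc).le
    rw [sum_insert hmU, filter_true_of_mem hle, card_insert_of_notMem hmU, sum_range_succ, ← ih,
      add_comm]
    congr 1
    refine sum_congr rfl fun p hp => ?_
    rw [filter_insert, if_neg (hm p hp).not_ge]

section RowFilling

variable {ι : Type*} [LinearOrder ι] {U : Finset ι} {ρ : ι → Option Bool} {c : ι} {p : WithBot ι}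

/-- The fillings allowed in a new full top row when `U` is the set of columns without an α. -/
def IsRowFilling_s7 (U : Finset ι) (ρ : ι → Option Bool) : Prop :=
  (∀ c, ρ c ≠ none → c ∈ U) ∧
  (∀ c c', ρ c = some false → c' < c → ρ c' = none) ∧
  (∀ c ∈ U, (∀ c', c < c' → ρ c' ≠ some false) → ρ c ≠ none)

/-- The row with a β in column `p` and an α in every column of `U` east of `p`;
`p = ⊥` encodes the row without β. -/
def fillRow (U : Finset ι) (p : WithBot ι) (c : ι) : Option Bool :=
  if c < p then none else if c = p then some false else if c ∈ U then some true else none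

theorem fillRow_eq_some_false_iff : fillRow U p c = some false ↔ ↑c = p := by
  grind [fillRow]

theorem fillRow_eq_some_true_iff : fillRow U p c = some true ↔ c ∈ U ∧ p < c := by
  grind [fillRow]

theorem fillRow_injective (U : Finset ι) : Function.Injective (fillRow U) := by
  intro p q h
  have hpq (c : ι) : ↑c = p ↔ ↑c = q := by
    rw [← fillRow_eq_some_false_iff (U := U), h, fillRow_eq_some_false_iff]
  induction p with
  | bot =>
    induction q with
    | bot => rfl
    | coe q => exact ((hpq q).2 rfl).symm
  | coe p => exact (hpq p).1 rfl

theorem isRowFilling_fillRow (hp : ∀ c : ι, ↑c = p → c ∈ U) : IsRowFilling_s7 U (fillRow U p) := by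
  refine ⟨fun c hc => ?_, fun c c' hc hlt => ?_, fun c hc hβ => ?_⟩
  · grind [fillRow]
  · rw [fillRow_eq_some_false_iff] at hc
    rw [fillRow, if_pos (hc ▸ WithBot.coe_lt_coe.2 hlt)]
  · have hcp : ¬ (c : WithBot ι) < p := by
      intro hlt
      obtain ⟨q, rfl⟩ := WithBot.ne_bot_iff_exists.1 hlt.ne_bot
      exact hβ q (WithBot.coe_lt_coe.1 hlt) (fillRow_eq_some_false_iff.2 rfl)
    grind [fillRow]

theorem IsRowFilling_s7.eq_fillRow_bot (h : IsRowFilling_s7 U ρ) (hβ : ∀ c, ρ c ≠ some false) :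
    ρ = fillRow U ⊥ := by
  obtain ⟨hU, -, hfill⟩ := h
  funext c
  rcases hc : ρ c with _ | _ | _ <;> grind [fillRow, not_lt_bot, WithBot.coe_ne_bot]

theorem IsRowFilling_s7.eq_fillRow_coe {p : ι} (h : IsRowFilling_s7 U ρ) (hp : ρ p = some false) :
    ρ = fillRow U p := by
  obtain ⟨hU, hwest, hfill⟩ := h
  have heast : ∀ c, p < c → ρ c ≠ some false := fun c hc hβ => by
    simp [hwest c p hβ hc] at hp
  funext c
  rcases lt_trichotomy c p with hc | rfl | hc
  · grind [fillRow, WithBot.coe_lt_coe]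
  · grind [fillRow]
  · have : c ∈ U → ρ c ≠ none := fun hcU => hfill c hcU fun c' hc' => heast c' (hc.trans hc')
    rcases hρ : ρ c with _ | _ | _ <;> grind [fillRow, WithBot.coe_lt_coe, WithBot.coe_inj]

theorem isRowFilling_iff_exists_fillRow :
    IsRowFilling_s7 U ρ ↔ ∃ p ∈ insert ⊥ (U.image WithBot.some), fillRow U p = ρ := by
  constructor
  · intro h
    by_cases hβ : ∀ c, ρ c ≠ some false
    · exact ⟨⊥, by simp, (h.eq_fillRow_bot hβ).symm⟩
    · push Not at hβ
      obtain ⟨p, hp⟩ := hβ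
      have hpU : p ∈ U := h.1 p (by simp [hp])
      exact ⟨p, by simp [hpU], (h.eq_fillRow_coe hp).symm⟩
  · rintro ⟨p, hp, rfl⟩
    exact isRowFilling_fillRow (by rintro c rfl; simpa using hp)

theorem sum_isRowFilling_s7 [Fintype ι]
    [DecidablePred fun ρ : ι → Option Bool => ∀ c, ρ c ≠ some false]
    (U : Finset ι) (g : ℕ → ℕ → M) :
    ∑ ρ with IsRowFilling_s7 U ρ,
      g #{c ∈ U | ρ c ≠ some true} (if ∀ c, ρ c ≠ some false then 1 else 0)
    = g 0 1 + ∑ i ∈ range #U, g (i + 1) 0 := by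
  have himage : ({ρ | IsRowFilling_s7 U ρ} : Finset _)
      = (insert ⊥ (U.image WithBot.some)).image (fillRow U) := by
    ext ρ
    simp only [mem_filter_univ, isRowFilling_iff_exists_fillRow, mem_image (f := fillRow U)]
  rw [himage, sum_image (fillRow_injective U).injOn, sum_insert (by simp),
    sum_image WithBot.coe_injective.injOn, ← sum_card_filter_le U fun i => g i 0]
  congr 1
  · have hempty : {c ∈ U | fillRow U ⊥ c ≠ some true} = ∅ :=
      filter_false_of_mem fun c hc => by simp [fillRow_eq_some_true_iff, hc]
    simp [hempty, fillRow_eq_some_false_iff]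
  · refine sum_congr rfl fun p _ => ?_
    congr 1
    · congr 1
      exact filter_congr fun c hc => by simp [fillRow_eq_some_true_iff, hc]
    · simp [fillRow_eq_some_false_iff]

end RowFilling

section Tableaux

/-- A shape together with a filling of the `k × w` rectangle. -/
abbrev ShapedFilling (k w : ℕ) : Type :=
  (Fin k → Fin (w + 1)) × (Fin k → Fin w → Option Bool)

/-- The Condensed Catalan tableaux of size `(k, k + w)`. -/
noncomputable def tableaux (k w : ℕ) : Finset (ShapedFilling k w) :=
  {T | Antitone T.1 ∧ IsCCT k w (fun i => T.1 i) T.2}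

/-- The columns containing no α. -/
noncomputable def freeCols (F : Fin k → Fin w → Option Bool) : Finset (Fin w) :=
  {c | ∀ i, F i c ≠ some true}

/-- The rows containing no β. -/
noncomputable def freeRows (F : Fin k → Fin w → Option Bool) : Finset (Fin k) :=
  {i | ∀ c, F i c ≠ some false}

theorem mem_freeCols {F : Fin k → Fin w → Option Bool} {c : Fin w} :
    c ∈ freeCols F ↔ ∀ i, F i c ≠ some true :=
  mem_filter_univ c

theorem mem_freeRows {F : Fin k → Fin w → Option Bool} {i : Fin k} :
    i ∈ freeRows F ↔ ∀ c, F i c ≠ some false :=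
  mem_filter_univ i

theorem mem_tableaux {T : ShapedFilling k w} :
    T ∈ tableaux k w ↔ Antitone T.1 ∧ IsCCT k w (fun i => T.1 i) T.2 :=
  mem_filter_univ T

theorem aCount_add_card_freeCols {T : ShapedFilling k w} (hT : T ∈ tableaux k w) :
    aCount k w T.2 + #(freeCols T.2) = w := by
  obtain ⟨-, -, -, hα, -⟩ := mem_tableaux.1 hT
  have hfree : freeCols T.2
      = (image Prod.snd {p : Fin k × Fin w | T.2 p.1 p.2 = some true})ᶜ := by
    ext c; simp [mem_freeCols]
  have hinj : Set.InjOn Prod.snd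
      (({p : Fin k × Fin w | T.2 p.1 p.2 = some true} : Finset _) : Set (Fin k × Fin w)) := by
    rintro ⟨i, c⟩ hi ⟨i', c'⟩ hi' rfl
    rcases lt_trichotomy i i' with hlt | rfl | hlt <;> grind
  rw [aCount, ← card_image_of_injOn hinj, hfree, card_add_card_compl, Fintype.card_fin]

theorem bCount_add_card_freeRows {T : ShapedFilling k w} (hT : T ∈ tableaux k w) :
    bCount k w T.2 + #(freeRows T.2) = k := by
  obtain ⟨-, -, hβ, -, -⟩ := mem_tableaux.1 hT
  have hfree : freeRows T.2
      = (image Prod.fst {p : Fin k × Fin w | T.2 p.1 p.2 = some false})ᶜ := by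
    ext i; simp [mem_freeRows]
  have hinj : Set.InjOn Prod.fst
      (({p : Fin k × Fin w | T.2 p.1 p.2 = some false} : Finset _) : Set (Fin k × Fin w)) := by
    rintro ⟨i, c⟩ hc ⟨i', c'⟩ hc' rfl
    rcases lt_trichotomy c c' with hlt | rfl | hlt <;> grind
  rw [bCount, ← card_image_of_injOn hinj, hfree, card_add_card_compl, Fintype.card_fin]

end Tableaux

section EmptyColumn

/-- Enlarge the rectangle by an easternmost column lying outside the shape. -/
def appendEmptyCol (T : ShapedFilling k w) : ShapedFilling k (w + 1) :=
  (fun i => (T.1 i).castSucc, fun i => Fin.snoc (T.2 i) none)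

theorem appendEmptyCol_injective :
    Function.Injective (appendEmptyCol : ShapedFilling k w → ShapedFilling k (w + 1)) := by
  rintro ⟨l, F⟩ ⟨l', F'⟩ h
  obtain ⟨hl, hF⟩ := Prod.mk.inj h
  refine Prod.ext (funext fun i => Fin.castSucc_injective _ (congrFun hl i)) (funext fun i => ?_)
  exact (Fin.snoc_inj.1 (congrFun hF i)).1

theorem appendEmptyCol_mem_tableaux_iff {T : ShapedFilling k w} :
    appendEmptyCol T ∈ tableaux k (w + 1) ↔ T ∈ tableaux k w := by
  have hshape : Antitone (appendEmptyCol T).1 ↔ Antitone T.1 := Iff.rfl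
  rw [mem_tableaux, mem_tableaux, hshape]
  simp only [IsCCT, appendEmptyCol, Fin.forall_fin_succ', Fin.snoc_castSucc, Fin.snoc_last,
    Fin.val_castSucc, Fin.val_last, Fin.castSucc_lt_castSucc_iff]
  grind

theorem exists_appendEmptyCol_eq {T : ShapedFilling k (w + 1)} (hT : T ∈ tableaux k (w + 1))
    (hlast : ∀ i, T.1 i ≠ Fin.last (w + 1)) : ∃ S : ShapedFilling k w, appendEmptyCol S = T := by
  choose l hl using fun i => Fin.exists_castSucc_eq.2 (hlast i)
  refine ⟨(l, fun i => Fin.init (T.2 i)), ?_⟩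
  have hnone (i : Fin k) : T.2 i (Fin.last w) = none :=
    (mem_tableaux.1 hT).2.1 i _ (by simpa [← hl i] using (l i).is_le)
  refine Prod.ext (funext hl) (funext fun i => ?_)
  calc Fin.snoc (Fin.init (T.2 i)) none
      = Fin.snoc (Fin.init (T.2 i)) (T.2 i (Fin.last w)) := by rw [hnone i]
    _ = T.2 i := Fin.snoc_init_self _

theorem card_freeCols_appendEmptyCol (T : ShapedFilling k w) :
    #(freeCols (appendEmptyCol T).2) = #(freeCols T.2) + 1 := by
  have h : freeCols (appendEmptyCol T).2
      = insert (Fin.last w) ((freeCols T.2).map Fin.castSuccEmb) := by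
    ext c
    induction c using Fin.lastCases <;> simp [mem_freeCols, appendEmptyCol]
  rw [h, card_insert_of_notMem (by simp), card_map]

theorem freeRows_appendEmptyCol (T : ShapedFilling k w) :
    freeRows (appendEmptyCol T).2 = freeRows T.2 := by
  ext i
  simp [mem_freeRows, appendEmptyCol, Fin.forall_fin_succ']

end EmptyColumn

section FullRow

/-- Add a northernmost row of maximal length with filling `ρ`. -/
def consFullRow (ρ : Fin w → Option Bool) (T : ShapedFilling k w) : ShapedFilling (k + 1) w :=
  (Fin.cons (Fin.last w) T.1, Fin.cons ρ T.2)

theorem consFullRow_injective :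
    Function.Injective2 (consFullRow : _ → ShapedFilling k w → ShapedFilling (k + 1) w) := by
  rintro ρ ρ' ⟨l, F⟩ ⟨l', F'⟩ h
  simp only [consFullRow, Prod.mk.injEq, Fin.cons_inj] at h ⊢
  tauto

theorem consFullRow_mem_tableaux_iff {ρ : Fin w → Option Bool} {T : ShapedFilling k w} :
    consFullRow ρ T ∈ tableaux (k + 1) w ↔
      T ∈ tableaux k w ∧ IsRowFilling_s7 (freeCols T.2) ρ := by
  have hshape : Antitone (consFullRow ρ T).1 ↔ Antitone T.1 := by
    simp [consFullRow, Antitone, Fin.forall_fin_succ, Fin.le_last]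
  rw [mem_tableaux, mem_tableaux, hshape]
  simp only [IsCCT, consFullRow, Fin.forall_fin_succ, Fin.cons_zero, Fin.cons_succ, Fin.val_last,
    Fin.is_lt, Fin.succ_pos, Fin.succ_lt_succ_iff, IsRowFilling_s7, mem_freeCols]
  grind

theorem exists_consFullRow_eq {T : ShapedFilling (k + 1) w} (hlast : T.1 0 = Fin.last w) :
    ∃ ρ S, consFullRow ρ S = T :=
  ⟨T.2 0, (Fin.tail T.1, Fin.tail T.2),
    Prod.ext (by rw [consFullRow, ← hlast, Fin.cons_self_tail]) (Fin.cons_self_tail T.2)⟩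

theorem freeCols_consFullRow (ρ : Fin w → Option Bool) (T : ShapedFilling k w) :
    freeCols (consFullRow ρ T).2 = {c ∈ freeCols T.2 | ρ c ≠ some true} := by
  ext c
  simp [mem_freeCols, consFullRow, Fin.forall_fin_succ, and_comm]

theorem card_freeRows_consFullRow (ρ : Fin w → Option Bool) (T : ShapedFilling k w) :
    #(freeRows (consFullRow ρ T).2)
      = #(freeRows T.2) + if ∀ c, ρ c ≠ some false then 1 else 0 := by
  rw [freeRows, freeRows, Fin.card_filter_univ_succ]
  simp only [consFullRow, Fin.cons_zero, Fin.cons_succ]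
  split_ifs <;> simp [add_comm]

end FullRow

section Transfer

/-- The sum of `h f r` over all tableaux of semiperimeter `n`, where `f` and `r` are the numbers
of columns without α and of rows without β. -/
noncomputable def tableauSum (n : ℕ) (h : ℕ → ℕ → M) : M :=
  ∑ p ∈ antidiagonal n, ∑ T ∈ tableaux p.1 p.2, h #(freeCols T.2) #(freeRows T.2)

/-- The transfer operator of the generating tree in which `(f, r)` has the children `(0, r + 1)`
and `(1, r), …, (f + 1, r)`. -/
def childSum (h : ℕ → ℕ → M) (f r : ℕ) : M :=
  h 0 (r + 1) + ∑ i ∈ range (f + 1), h (i + 1) r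

theorem sum_tableaux_emptyCol (h : ℕ → ℕ → M) :
    ∑ T ∈ tableaux k (w + 1) with ¬ ∃ i, T.1 i = Fin.last (w + 1),
      h #(freeCols T.2) #(freeRows T.2)
    = ∑ T ∈ tableaux k w, h (#(freeCols T.2) + 1) #(freeRows T.2) := by
  have himage : {T ∈ tableaux k (w + 1) | ¬ ∃ i, T.1 i = Fin.last (w + 1)}
      = (tableaux k w).image appendEmptyCol := by
    ext T
    simp only [mem_filter, mem_image, not_exists]
    constructor
    · rintro ⟨hT, hlast⟩
      obtain ⟨S, rfl⟩ := exists_appendEmptyCol_eq hT hlast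
      exact ⟨S, appendEmptyCol_mem_tableaux_iff.1 hT, rfl⟩
    · rintro ⟨S, hS, rfl⟩
      exact ⟨appendEmptyCol_mem_tableaux_iff.2 hS, fun i => Fin.castSucc_ne_last _⟩
  simp only [himage, sum_image appendEmptyCol_injective.injOn, card_freeCols_appendEmptyCol,
    freeRows_appendEmptyCol]

theorem sum_tableaux_fullRow (h : ℕ → ℕ → M) :
    ∑ T ∈ tableaux (k + 1) w with ∃ i, T.1 i = Fin.last w, h #(freeCols T.2) #(freeRows T.2)
    = ∑ T ∈ tableaux k w, (h 0 (#(freeRows T.2) + 1)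
        + ∑ i ∈ range #(freeCols T.2), h (i + 1) #(freeRows T.2)) := by
  have himage : {T ∈ tableaux (k + 1) w | ∃ i, T.1 i = Fin.last w}
      = ((tableaux k w).sigma fun T => {ρ | IsRowFilling_s7 (freeCols T.2) ρ}).image
          fun x => consFullRow x.2 x.1 := by
    ext T
    simp only [mem_filter, mem_image, mem_sigma, mem_univ, true_and]
    constructor
    · rintro ⟨hT, i, hi⟩
      have hlast : T.1 0 = Fin.last w :=
        Fin.last_le_iff.1 (hi ▸ (mem_tableaux.1 hT).1 (Fin.zero_le i))
      obtain ⟨ρ, S, rfl⟩ := exists_consFullRow_eq hlast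
      exact ⟨⟨S, ρ⟩, consFullRow_mem_tableaux_iff.1 hT, rfl⟩
    · rintro ⟨⟨S, ρ⟩, hS, rfl⟩
      exact ⟨consFullRow_mem_tableaux_iff.2 hS, 0, rfl⟩
  have hinj : Function.Injective
      fun x : (_ : ShapedFilling k w) × (Fin w → Option Bool) => consFullRow x.2 x.1 := by
    rintro ⟨S, ρ⟩ ⟨S', ρ'⟩ hx
    obtain ⟨rfl, rfl⟩ := consFullRow_injective hx
    rfl
  rw [himage, sum_image hinj.injOn, sum_sigma]
  refine sum_congr rfl fun T _ => ?_
  simp only [freeCols_consFullRow, card_freeRows_consFullRow]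
  exact sum_isRowFilling_s7 (freeCols T.2) fun f r => h f (#(freeRows T.2) + r)

theorem tableauSum_succ (n : ℕ) (h : ℕ → ℕ → M) :
    tableauSum (n + 1) h = tableauSum n (childSum h) := by
  have hno_row : ∑ T ∈ tableaux 0 (n + 1) with ∃ i, T.1 i = Fin.last (n + 1),
      h #(freeCols T.2) #(freeRows T.2) = 0 := by simp
  have hno_col : ∑ T ∈ tableaux (n + 1) 0 with ¬ ∃ i, T.1 i = Fin.last 0,
      h #(freeCols T.2) #(freeRows T.2) = 0 := by simp [Fin.fin_one_eq_zero]
  calc tableauSum (n + 1) h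
      = ∑ p ∈ antidiagonal (n + 1),
          ∑ T ∈ tableaux p.1 p.2 with ∃ i, T.1 i = Fin.last p.2,
            h #(freeCols T.2) #(freeRows T.2)
        + ∑ p ∈ antidiagonal (n + 1),
          ∑ T ∈ tableaux p.1 p.2 with ¬ ∃ i, T.1 i = Fin.last p.2,
            h #(freeCols T.2) #(freeRows T.2) := by
        simp only [tableauSum, ← sum_add_distrib, sum_filter_add_sum_filter_not]
    _ = ∑ p ∈ antidiagonal n, ∑ T ∈ tableaux p.1 p.2,
          (h 0 (#(freeRows T.2) + 1) + ∑ i ∈ range #(freeCols T.2), h (i + 1) #(freeRows T.2))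
        + ∑ p ∈ antidiagonal n, ∑ T ∈ tableaux p.1 p.2,
          h (#(freeCols T.2) + 1) #(freeRows T.2) := by
        rw [Nat.sum_antidiagonal_succ, Nat.sum_antidiagonal_succ', hno_row, hno_col, zero_add,
          zero_add]
        simp only [sum_tableaux_emptyCol, sum_tableaux_fullRow]
    _ = tableauSum n (childSum h) := by
        simp only [tableauSum, childSum, sum_range_succ, ← sum_add_distrib, add_assoc]

theorem tableauSum_add (n : ℕ) (h h' : ℕ → ℕ → M) :
    tableauSum n (h + h') = tableauSum n h + tableauSum n h' := by
  simp only [tableauSum, Pi.add_apply, sum_add_distrib]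

end Transfer

section Count

/-- The number of tableaux of semiperimeter `n` with `t` columns without α and `r` rows
without β. -/
noncomputable def tableauCount (n t r : ℕ) : ℕ :=
  ∑ p ∈ antidiagonal n, #{T ∈ tableaux p.1 p.2 | #(freeCols T.2) = t ∧ #(freeRows T.2) = r}

/-- The indicator function of the pair `(t, r)`. -/
def pairIndicator (t r f r' : ℕ) : ℕ := if f = t ∧ r' = r then 1 else 0

theorem tableauCount_eq_tableauSum (n t r : ℕ) :
    tableauCount n t r = tableauSum n (pairIndicator t r) := by
  simp only [tableauCount, tableauSum, pairIndicator, card_filter]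

theorem childSum_pairIndicator_succ_apply (t r f r' : ℕ) :
    childSum (pairIndicator (t + 1) r) f r' = if t ≤ f ∧ r' = r then 1 else 0 := by
  by_cases hr : r' = r <;> simp [childSum, pairIndicator, hr]

theorem childSum_pairIndicator_succ (t r : ℕ) :
    childSum (pairIndicator (t + 1) r)
      = pairIndicator t r + childSum (pairIndicator (t + 2) r) := by
  funext f r'
  simp only [Pi.add_apply, childSum_pairIndicator_succ_apply, pairIndicator]
  grind

theorem childSum_pairIndicator_zero_succ (r : ℕ) :
    childSum (pairIndicator 0 (r + 1)) = childSum (pairIndicator 1 r) := by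
  funext f r'
  rw [← zero_add 1, childSum_pairIndicator_succ_apply]
  simp [childSum, pairIndicator]

theorem childSum_pairIndicator_zero_zero : childSum (pairIndicator 0 0) = 0 := by
  funext f r
  simp [childSum, pairIndicator]

theorem tableauCount_succ_succ (n t r : ℕ) :
    tableauCount (n + 1) (t + 1) r = tableauCount n t r + tableauCount (n + 1) (t + 2) r := by
  simp only [tableauCount_eq_tableauSum, tableauSum_succ]
  rw [childSum_pairIndicator_succ, tableauSum_add]

theorem tableauCount_succ_zero_succ (n r : ℕ) :
    tableauCount (n + 1) 0 (r + 1) = tableauCount n 0 r + tableauCount (n + 1) 2 r := by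
  rw [← tableauCount_succ_succ]
  simp only [tableauCount_eq_tableauSum, tableauSum_succ, childSum_pairIndicator_zero_succ]

theorem tableauCount_succ_zero_zero (n : ℕ) : tableauCount (n + 1) 0 0 = 0 := by
  rw [tableauCount_eq_tableauSum, tableauSum_succ, childSum_pairIndicator_zero_zero]
  simp [tableauSum]

theorem tableauCount_zero_zero_zero : tableauCount 0 0 0 = 1 := by
  simp [tableauCount, tableaux, IsCCT, Subsingleton.antitone, freeCols, freeRows]

theorem tableauCount_eq_zero_of_lt {n t r : ℕ} (hn : n < t + r) : tableauCount n t r = 0 := by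
  refine sum_eq_zero fun p hp => card_eq_zero.2 (filter_eq_empty_iff.2 ?_)
  rintro T - ⟨rfl, rfl⟩
  have hcols := card_finset_fin_le (freeCols T.2)
  have hrows := card_finset_fin_le (freeRows T.2)
  have hsum := mem_antidiagonal.1 hp
  omega

theorem tableauCount_eq_one_of_add_eq {n t r : ℕ} (hn : t + r = n) : tableauCount n t r = 1 := by
  induction n generalizing t r with
  | zero =>
    obtain ⟨rfl, rfl⟩ := Nat.add_eq_zero_iff.1 hn
    exact tableauCount_zero_zero_zero
  | succ n ih =>
    rcases t with - | t
    · obtain rfl : r = n + 1 := by omega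
      rw [tableauCount_succ_zero_succ, ih (by omega), tableauCount_eq_zero_of_lt (by omega)]
    · rw [tableauCount_succ_succ, ih (by omega), tableauCount_eq_zero_of_lt (by omega)]

theorem ballot_choose_step {s d P Q : ℕ}
    (hP : (s + 2 * (d + 1)) * P = s * (s + 2 * (d + 1)).choose (d + 1))
    (hQ : (s + 2 + 2 * d) * Q = (s + 2) * (s + 2 + 2 * d).choose d) :
    (s + 1 + 2 * (d + 1)) * (P + Q) = (s + 1) * (s + 1 + 2 * (d + 1)).choose (d + 1) := by
  obtain ⟨m, hm⟩ : ∃ m, m = s + 2 * d + 2 := ⟨_, rfl⟩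
  rw [show s + 2 * (d + 1) = m by omega] at hP
  rw [show s + 2 + 2 * d = m by omega] at hQ
  rw [show s + 1 + 2 * (d + 1) = m + 1 by omega, Nat.choose_succ_succ']
  have habsorb := Nat.choose_succ_right_eq m d
  rw [show m - d = s + d + 2 by omega] at habsorb
  refine Nat.eq_of_mul_eq_mul_left (show 0 < m by omega) ?_
  zify at *
  linear_combination (m + 1 : ℤ) * (hP + hQ) - 2 * habsorb
    + ((m.choose d : ℤ) - m.choose (d + 1)) * hm

theorem mul_tableauCount_eq_mul_choose {s t r : ℕ} (d : ℕ) (hs : t + r = s) :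
    (s + 2 * d) * tableauCount (s + d) t r = s * (s + 2 * d).choose d := by
  induction d generalizing s t r with
  | zero => simp [tableauCount_eq_one_of_add_eq hs]
  | succ d ihd =>
    induction s generalizing t r with
    | zero =>
      obtain ⟨rfl, rfl⟩ := Nat.add_eq_zero_iff.1 hs
      rw [← add_assoc, tableauCount_succ_zero_zero]
      simp
    | succ s ihs =>
      have hstep {t' r' : ℕ} (h : t' + r' = s) :=
        ballot_choose_step (ihs h) (ihd (s := s + 2) (t := t' + 2) (r := r') (by omega))
      rw [show s + 2 + d = s + (d + 1) + 1 by omega] at hstep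
      rw [add_right_comm s 1 (d + 1)]
      rcases t with - | t
      · obtain rfl : r = s + 1 := by omega
        rw [tableauCount_succ_zero_succ, hstep (zero_add s)]
      · rw [tableauCount_succ_succ, hstep (by omega)]

end Count

theorem coeff_X_pow_mul_X_pow {R σ : Type*} [CommSemiring R] {i j : σ} (hij : i ≠ j)
    (a b x y : ℕ) :
    MvPolynomial.coeff (Finsupp.single i x + Finsupp.single j y)
      ((MvPolynomial.X i : MvPolynomial σ R) ^ a * MvPolynomial.X j ^ b)
      = if a = x ∧ b = y then 1 else 0 := by
  have hexp : Finsupp.single i a + Finsupp.single j b = Finsupp.single i x + Finsupp.single j y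
      ↔ a = x ∧ b = y := by
    refine ⟨fun h => ⟨?_, ?_⟩, by rintro ⟨rfl, rfl⟩; rfl⟩
    · simpa [hij.symm] using DFunLike.congr_fun h i
    · simpa [hij] using DFunLike.congr_fun h j
  simp only [MvPolynomial.X_pow_eq_monomial, MvPolynomial.monomial_mul,
    MvPolynomial.coeff_monomial, hexp, mul_one]

/-- The polynomial `Z_n(α, β) = Σ_k N_{n-k,k}(α, β)` with `α = X 0` and `β = X 1`. -/
noncomputable def partitionFunction (R : Type*) [CommSemiring R] (n : ℕ) :
    MvPolynomial (Fin 2) R :=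
  ∑ k ∈ range (n + 1), ∑ T ∈ tableaux k (n - k),
    MvPolynomial.X 0 ^ (k + aCount k (n - k) T.2) *
      MvPolynomial.X 1 ^ (n - k + bCount k (n - k) T.2)

theorem coeff_partitionFunction (R : Type*) [CommSemiring R] {n t r : ℕ} (ht : t ≤ n)
    (hr : r ≤ n) :
    MvPolynomial.coeff (Finsupp.single 0 (n - t) + Finsupp.single 1 (n - r))
      (partitionFunction R n) = tableauCount n t r := by
  rw [partitionFunction, MvPolynomial.coeff_sum, tableauCount,
    Nat.sum_antidiagonal_eq_sum_range_succ_mk, Nat.cast_sum]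
  refine sum_congr rfl fun k hk => ?_
  rw [MvPolynomial.coeff_sum, card_filter, Nat.cast_sum]
  refine sum_congr rfl fun T hT => ?_
  rw [coeff_X_pow_mul_X_pow zero_ne_one, Nat.cast_ite, Nat.cast_one, Nat.cast_zero]
  have hkn := mem_range_succ_iff.1 hk
  have hα := aCount_add_card_freeCols hT
  have hβ := bCount_add_card_freeRows hT
  dsimp only at hα hβ ⊢
  exact if_congr (by omega) rfl rfl

/-- The coefficient of `α^(n-t) β^(n+t-s)` in `Z_n(α,β) = Σ_{k=0}^n N_{n-k,k}(α,β)`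
satisfies `(2n-s) · coeff = s · binom(2n-s, n)`; in particular it is
`(s/(2n-s))·binom(2n-s,n)`, independent of `t`. Here `α = X 0`, `β = X 1` in
`ℤ[α,β]`. -/
theorem stmt7 (n s t : ℕ) (hn : 1 ≤ n) (hs1 : 1 ≤ s) (hsn : s ≤ n) (hts : t ≤ s) :
    ((2 * n - s : ℕ) : ℤ) *
        MvPolynomial.coeff
          (Finsupp.single (0 : Fin 2) (n - t) + Finsupp.single (1 : Fin 2) (n + t - s))
          (∑ k ∈ Finset.range (n + 1),
            ∑ pr ∈ Finset.univ.filter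
                (fun pr : (Fin k → Fin (n - k + 1)) × (Fin k → Fin (n - k) → Option Bool) =>
                  (∀ i j : Fin k, i ≤ j → (pr.1 j : ℕ) ≤ (pr.1 i : ℕ)) ∧
                  IsCCT k (n - k) (fun i => (pr.1 i : ℕ)) pr.2),
              (MvPolynomial.X 0 : MvPolynomial (Fin 2) ℤ) ^ (k + aCount k (n - k) pr.2) *
                MvPolynomial.X 1 ^ ((n - k) + bCount k (n - k) pr.2))
      = (s : ℤ) * (Nat.choose (2 * n - s) n : ℤ) := by
  obtain ⟨d, rfl⟩ := Nat.exists_eq_add_of_le hsn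
  calc
    _ = ((2 * (s + d) - s : ℕ) : ℤ) * MvPolynomial.coeff
          (Finsupp.single 0 (s + d - t) + Finsupp.single 1 (s + d - (s - t)))
          (partitionFunction ℤ (s + d)) := by
        rw [partitionFunction, Nat.sub_sub_right (s + d) hts]
        congr!
    _ = (((s + 2 * d) * tableauCount (s + d) t (s - t) : ℕ) : ℤ) := by
        rw [coeff_partitionFunction ℤ (by omega) (by omega), Nat.cast_mul]
        congr 2
        omega
    _ = ((s * (s + 2 * d).choose d : ℕ) : ℤ) := by
        rw [mul_tableauCount_eq_mul_choose d (Nat.add_sub_cancel' hts)]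
    _ = s * ((2 * (s + d) - s).choose (s + d) : ℤ) := by
        rw [show 2 * (s + d) - s = s + d + d by omega, Nat.choose_symm_add, Nat.cast_mul, two_mul,
          add_assoc]
end
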